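/- There exists R ∈ (1.665, 1.666) such that ∫_ℝ (Q(w−R) − Q(w)) tanh(R w) dw = R/2. -/

import Mathlib

open MeasureTheory Real

/-- The standard Gaussian tail function `Q(x) = ∫_x^∞ (2π)^{-1/2} e^{-t²/2} dt`. -/
noncomputable def gaussQ (x : ℝ) : ℝ :=
  ∫ t in Set.Ioi x, (2 * Real.pi) ^ (-(1 : ℝ) / 2) * Real.exp (-t ^ 2 / 2)

/-!
Integrating by parts against `log (cosh (R w))` turns `tanh` into differences of Gaussian
densities. On the half-line `log (cosh (R w)) = R w - log 2 + log (1 + e^{-2Rw})`, so the integral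
becomes an explicit combination of Mills ratios and of transforms
`∫_0^∞ log (1 + e^{-2Rw}) e^{-tw - w²/2} dw`. Replacing `log (1 + u)` on `[0, 1]` by a polynomial
without constant term, with an error that is a small multiple of `u`, expresses these transforms
through Mills ratios as well, and Laplace's continued fraction encloses Mills ratios between
rational numbers. The difference of the two sides of the threshold equation is thereby seen to be
negative at `1.665` and positive at `1.666`, and the intermediate value theorem applies.
-/

section GaussianIntegrability

variable {c : ℝ}

lemma integrable_pow_mul_exp_sub_sq_div (hc : 0 < c) (n : ℕ) (t : ℝ) :
    Integrable (fun w : ℝ => w ^ n * exp (-t * w - w ^ 2 / c)) := by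
  have hmaj : Integrable (fun w : ℝ => w ^ n * exp (-(1 / (2 * c)) * w ^ 2)) := by
    have hn : (-1 : ℝ) < n := neg_one_lt_zero.trans_le n.cast_nonneg
    simpa only [rpow_natCast] using
      integrable_rpow_mul_exp_neg_mul_sq (b := 1 / (2 * c)) (by positivity) hn
  refine (hmaj.const_mul (exp (c * t ^ 2 / 2))).mono (by fun_prop) (.of_forall fun w => ?_)
  have hexp : exp (-t * w - w ^ 2 / c)
      ≤ exp (c * t ^ 2 / 2) * exp (-(1 / (2 * c)) * w ^ 2) := by
    have hsq : c * t ^ 2 / 2 + -(1 / (2 * c)) * w ^ 2 - (-t * w - w ^ 2 / c)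
        = (c * t + w) ^ 2 / (2 * c) := by
      field_simp
      ring
    rw [← exp_add, exp_le_exp, ← sub_nonneg, hsq]
    positivity
  rw [norm_mul, norm_mul, norm_mul, norm_of_nonneg (exp_pos _).le, norm_of_nonneg (exp_pos _).le,
    norm_of_nonneg (exp_pos _).le, mul_left_comm]
  gcongr

lemma integrable_mul_exp_sub_sq_div_of_abs_le (hc : 0 < c) {f : ℝ → ℝ} {A B : ℝ}
    (hf : AEStronglyMeasurable f) (hle : ∀ w, |f w| ≤ A + B * |w|) (t : ℝ) :
    Integrable (fun w => f w * exp (-t * w - w ^ 2 / c)) := by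
  have hmaj := ((integrable_pow_mul_exp_sub_sq_div hc 0 t).norm.const_mul A).add
    ((integrable_pow_mul_exp_sub_sq_div hc 1 t).norm.const_mul B)
  refine hmaj.mono' (hf.mul (by fun_prop)) (.of_forall fun w => ?_)
  simp only [norm_mul, norm_eq_abs, abs_exp, pow_zero, pow_one, one_mul, Pi.add_apply]
  calc |f w| * exp (-t * w - w ^ 2 / c)
      ≤ (A + B * |w|) * exp (-t * w - w ^ 2 / c) := by gcongr; exact hle w
    _ = _ := by ring

lemma integrable_exp_sub_sq_div (hc : 0 < c) (t : ℝ) :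
    Integrable (fun w : ℝ => exp (-t * w - w ^ 2 / c)) := by
  simpa using integrable_pow_mul_exp_sub_sq_div hc 0 t

end GaussianIntegrability

section GaussianTail

lemma integrable_exp_neg_sq_div_two : Integrable (fun t : ℝ => exp (-t ^ 2 / 2)) := by
  simpa [neg_div] using integrable_exp_sub_sq_div two_pos 0

lemma gaussQ_sub_gaussQ (a b : ℝ) :
    gaussQ a - gaussQ b = (√(2 * π))⁻¹ * ∫ t in a..b, exp (-t ^ 2 / 2) := by
  have hconst : (2 * π) ^ (-(1 : ℝ) / 2) = (√(2 * π))⁻¹ := by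
    rw [neg_div, rpow_neg (by positivity), sqrt_eq_rpow]
  have hsplit := intervalIntegral.integral_interval_add_Ioi (a := a) (b := b)
    integrable_exp_neg_sq_div_two.integrableOn integrable_exp_neg_sq_div_two.integrableOn
  simp only [gaussQ, integral_const_mul, hconst]
  rw [← mul_sub, ← hsplit, add_sub_cancel_right]

lemma hasDerivAt_gaussQ (x : ℝ) :
    HasDerivAt gaussQ (-((√(2 * π))⁻¹ * exp (-x ^ 2 / 2))) x := by
  have hcont : Continuous (fun t : ℝ => exp (-t ^ 2 / 2)) := by fun_prop
  have hftc := intervalIntegral.integral_hasDerivAt_right (hcont.intervalIntegrable 0 x)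
    hcont.aestronglyMeasurable.stronglyMeasurableAtFilter hcont.continuousAt
  have hQ : gaussQ = fun y => gaussQ 0 - (√(2 * π))⁻¹ * ∫ t in (0 : ℝ)..y, exp (-t ^ 2 / 2) := by
    funext y
    rw [← gaussQ_sub_gaussQ, sub_sub_cancel]
  rw [hQ]
  exact (hftc.const_mul _).const_sub _

@[fun_prop]
lemma continuous_gaussQ : Continuous gaussQ :=
  continuous_iff_continuousAt.2 fun x => (hasDerivAt_gaussQ x).continuousAt

lemma abs_gaussQ_sub_le {a B : ℝ} (ha : |a| ≤ B) (w : ℝ) :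
    |gaussQ (w - a) - gaussQ w| ≤ (√(2 * π))⁻¹ * (B * exp (B ^ 2 / 2)) * exp (-w ^ 2 / 4) := by
  have : 0 ≤ B := (abs_nonneg a).trans ha
  have hpoint : ∀ t ∈ Set.uIoc (w - a) w,
      ‖exp (-t ^ 2 / 2)‖ ≤ exp (B ^ 2 / 2) * exp (-w ^ 2 / 4) := by
    intro t ht
    have hdist : |w - t| ≤ B := by
      have := Set.abs_sub_right_of_mem_uIcc (Set.uIoc_subset_uIcc ht)
      rw [sub_sub_cancel] at this
      exact this.trans ha
    have hsq : (w - t) ^ 2 ≤ B ^ 2 := sq_le_sq' (abs_le.1 hdist).1 (abs_le.1 hdist).2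
    rw [norm_of_nonneg (exp_pos _).le, ← exp_add, exp_le_exp]
    nlinarith [sq_nonneg (w - 2 * t)]
  have hint := intervalIntegral.norm_integral_le_of_norm_le_const hpoint
  rw [sub_sub_cancel, norm_eq_abs] at hint
  rw [gaussQ_sub_gaussQ, abs_mul, abs_of_nonneg (by positivity : 0 ≤ (√(2 * π))⁻¹), mul_assoc]
  gcongr
  calc |∫ t in (w - a)..w, exp (-t ^ 2 / 2)| ≤ exp (B ^ 2 / 2) * exp (-w ^ 2 / 4) * |a| := hint
    _ ≤ exp (B ^ 2 / 2) * exp (-w ^ 2 / 4) * B := by gcongr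
    _ = B * exp (B ^ 2 / 2) * exp (-w ^ 2 / 4) := by ring

lemma integrable_gaussQ_sub_mul {f : ℝ → ℝ} {A B : ℝ} (hf : AEStronglyMeasurable f)
    (hle : ∀ w, |f w| ≤ A + B * |w|) (a : ℝ) :
    Integrable (fun w => (gaussQ (w - a) - gaussQ w) * f w) := by
  have hmaj := (integrable_mul_exp_sub_sq_div_of_abs_le four_pos hf hle 0).norm.const_mul
    ((√(2 * π))⁻¹ * (|a| * exp (|a| ^ 2 / 2)))
  have hQ : Continuous (fun w => gaussQ (w - a) - gaussQ w) := by fun_prop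
  refine hmaj.mono' (hQ.aestronglyMeasurable.mul hf) (.of_forall fun w => ?_)
  simp only [norm_mul, norm_eq_abs, abs_exp, neg_zero, zero_mul, zero_sub, ← neg_div]
  calc |gaussQ (w - a) - gaussQ w| * |f w|
      ≤ (√(2 * π))⁻¹ * (|a| * exp (|a| ^ 2 / 2)) * exp (-w ^ 2 / 4) * |f w| := by
        gcongr
        exact abs_gaussQ_sub_le le_rfl w
    _ = _ := by ring

lemma exp_neg_sub_sq_div_two (a w : ℝ) :
    exp (-(w - a) ^ 2 / 2) = exp (-(a ^ 2 / 2)) * exp (-(-a) * w - w ^ 2 / 2) := by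
  rw [← exp_add]
  ring_nf

theorem integral_gaussQ_sub_mul_deriv {v v' : ℝ → ℝ} {C : ℝ} (hv : ∀ w, HasDerivAt v (v' w) w)
    (hC : ∀ w, |v' w| ≤ C) (a : ℝ) :
    ∫ w, (gaussQ (w - a) - gaussQ w) * v' w =
      (√(2 * π))⁻¹ *
        ((∫ w, exp (-(w - a) ^ 2 / 2) * v w) - ∫ w, exp (-w ^ 2 / 2) * v w) := by
  have hv_cont : Continuous v := continuous_iff_continuousAt.2 fun w => (hv w).continuousAt
  have hv'_meas : AEStronglyMeasurable v' := by
    rw [← funext fun w => (hv w).deriv]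
    exact (stronglyMeasurable_deriv v).aestronglyMeasurable
  have hv_growth : ∀ w, |v w| ≤ |v 0| + C * |w| := fun w => by
    have hmvt := convex_univ.norm_image_sub_le_of_norm_hasDerivWithin_le
      (fun x _ => (hv x).hasDerivWithinAt) (fun x _ => hC x) (Set.mem_univ 0) (Set.mem_univ w)
    rw [norm_eq_abs, norm_eq_abs, sub_zero] at hmvt
    linarith [abs_sub_abs_le_abs_sub (v w) (v 0)]
  have hint : ∀ b, Integrable (fun w => exp (-(w - b) ^ 2 / 2) * v w) := fun b => by
    simp_rw [exp_neg_sub_sq_div_two, mul_assoc, mul_comm _ (v _)]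
    exact (integrable_mul_exp_sub_sq_div_of_abs_le two_pos hv_cont.aestronglyMeasurable
      hv_growth _).const_mul _
  have hint_zero : Integrable (fun w => exp (-w ^ 2 / 2) * v w) := by
    simpa only [sub_zero] using hint 0
  have hu' : ∀ w, HasDerivAt (fun w => gaussQ (w - a) - gaussQ w)
      (-((√(2 * π))⁻¹ * (exp (-(w - a) ^ 2 / 2) - exp (-w ^ 2 / 2)))) w := fun w =>
    (((hasDerivAt_gaussQ (w - a)).comp_sub_const w a).sub (hasDerivAt_gaussQ w)).congr_deriv
      (by ring)
  have hu'v : Integrable (fun w =>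
      -((√(2 * π))⁻¹ * (exp (-(w - a) ^ 2 / 2) - exp (-w ^ 2 / 2))) * v w) :=
    (((hint a).sub hint_zero).const_mul (-(√(2 * π))⁻¹)).congr
      (.of_forall fun w => by simp only [Pi.sub_apply]; ring)
  rw [integral_mul_deriv_eq_deriv_mul_of_integrable (fun w _ => hu' w) (fun w _ => hv w)
      (integrable_gaussQ_sub_mul (B := 0) hv'_meas (by simpa using hC) a) hu'v
      (integrable_gaussQ_sub_mul hv_cont.aestronglyMeasurable hv_growth a),
    ← integral_sub (hint a) hint_zero, ← integral_const_mul, ← integral_neg]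
  congr 1 with w
  ring

end GaussianTail

section LaplaceTransform

/-- The Laplace transform at `t` of `f(w) e^{-w²/2}` on the half-line. It is the common form of
the Mills ratio, of the half-line Gaussian moments and of the logarithmic integrals into which the
threshold integral decomposes. -/
noncomputable def gaussLaplace (f : ℝ → ℝ) (t : ℝ) : ℝ :=
  ∫ w in Set.Ioi 0, f w * exp (-t * w - w ^ 2 / 2)

/-- The Mills ratio `Q(t) / φ(t)` of the standard Gaussian, in its form
`∫_0^∞ e^{-tw - w²/2} dw`. -/
noncomputable def millsRatio (t : ℝ) : ℝ :=
  gaussLaplace (fun _ => 1) t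

lemma integral_eq_integral_Ioi_add_comp_neg {E : Type*} [NormedAddCommGroup E] [NormedSpace ℝ E]
    {f : ℝ → E} (hf : Integrable f) :
    ∫ w, f w = ∫ w in Set.Ioi 0, (f w + f (-w)) := by
  rw [integral_add hf.integrableOn hf.comp_neg.integrableOn, integral_comp_neg_Ioi, neg_zero,
    add_comm, intervalIntegral.integral_Iic_add_Ioi hf.integrableOn hf.integrableOn]

lemma integral_exp_neg_sub_sq_mul_even {f : ℝ → ℝ} (hf : f.Even) {a : ℝ}
    (hint : Integrable (fun w => f w * exp (-(-a) * w - w ^ 2 / 2))) :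
    ∫ w, exp (-(w - a) ^ 2 / 2) * f w =
      exp (-(a ^ 2 / 2)) * (gaussLaplace f (-a) + gaussLaplace f a) := by
  have hreflect : ∀ w, f (-w) * exp (-(-a) * -w - (-w) ^ 2 / 2) =
      f w * exp (-a * w - w ^ 2 / 2) := fun w => by rw [hf w]; ring_nf
  have hint_neg : Integrable (fun w => f w * exp (-a * w - w ^ 2 / 2)) := by
    simpa only [hreflect] using hint.comp_neg
  simp_rw [exp_neg_sub_sq_div_two, mul_assoc, mul_comm _ (f _)]
  rw [integral_const_mul, integral_eq_integral_Ioi_add_comp_neg hint]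
  simp_rw [hreflect]
  rw [integral_add hint.integrableOn hint_neg.integrableOn, gaussLaplace, gaussLaplace]

lemma sqrt_two_pi_eq_millsRatio (a : ℝ) :
    √(2 * π) = exp (-(a ^ 2 / 2)) * (millsRatio (-a) + millsRatio a) := by
  have hgauss : ∫ w : ℝ, exp (-(w - a) ^ 2 / 2) = √(2 * π) := by
    rw [integral_sub_right_eq_self (fun w : ℝ => exp (-w ^ 2 / 2)) a]
    have := integral_gaussian (1 / 2)
    rw [div_div_eq_mul_div, div_one, mul_comm] at this
    simpa only [neg_mul, one_div_mul_eq_div, neg_div] using this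
  have heven := integral_exp_neg_sub_sq_mul_even (f := fun _ => 1) (fun _ => rfl) (a := a)
    (by simpa using integrable_exp_sub_sq_div two_pos (-a))
  simpa only [mul_one, hgauss, millsRatio] using heven

end LaplaceTransform

section ContinuedFraction

/-- The depth-`m` truncation of the tail `(n+1)/(t + (n+2)/(t + (n+3)/(t + ⋯)))` of Laplace's
continued fraction for the Mills ratio. The field is arbitrary so that the truncations can be
computed in `ℚ` and compared with integrals in `ℝ`. -/
def laplaceFrac {K : Type*} [Field K] (t : K) : ℕ → ℕ → K
  | _, 0 => 0
  | n, m + 1 => (n + 1) / (t + laplaceFrac t (n + 1) m)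

/-- The convergents `1/(t + 1/(t + 2/(t + ⋯)))` of Laplace's continued fraction for the Mills
ratio; the ones of even depth `m` are upper bounds and the ones of odd depth lower bounds. -/
def millsConvergent {K : Type*} [Field K] (t : K) (m : ℕ) : K :=
  1 / (t + laplaceFrac t 0 m)

lemma laplaceFrac_nonneg {t : ℝ} (ht : 0 ≤ t) (n m : ℕ) : 0 ≤ laplaceFrac t n m := by
  induction m generalizing n with
  | zero => exact le_rfl
  | succ m ih =>
    have := ih (n + 1)
    rw [laplaceFrac]
    positivity

@[simp, norm_cast]
lemma cast_laplaceFrac (t : ℚ) (n m : ℕ) :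
    ((laplaceFrac t n m : ℚ) : ℝ) = laplaceFrac (t : ℝ) n m := by
  induction m generalizing n with
  | zero => simp [laplaceFrac]
  | succ m ih => simp [laplaceFrac, ih]

@[simp, norm_cast]
lemma cast_millsConvergent (t : ℚ) (m : ℕ) :
    ((millsConvergent t m : ℚ) : ℝ) = millsConvergent (t : ℝ) m := by
  simp [millsConvergent]

/-- The half-line Gaussian moments `∫_0^∞ w^n e^{-tw - w²/2} dw`, whose successive ratios are the
tails of Laplace's continued fraction. -/
noncomputable def halfMoment (n : ℕ) (t : ℝ) : ℝ :=
  gaussLaplace (fun w => w ^ n) t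

lemma integrable_pow_mul_exp_sub_sq_div_two (n : ℕ) (t : ℝ) :
    Integrable (fun w : ℝ => w ^ n * exp (-t * w - w ^ 2 / 2)) :=
  integrable_pow_mul_exp_sub_sq_div two_pos n t

@[simp]
lemma halfMoment_zero (t : ℝ) : halfMoment 0 t = millsRatio t := by
  simp [halfMoment, millsRatio]

lemma halfMoment_nonneg (n : ℕ) (t : ℝ) : 0 ≤ halfMoment n t :=
  setIntegral_nonneg measurableSet_Ioi fun _ hw =>
    mul_nonneg (pow_nonneg (le_of_lt hw) n) (exp_pos _).le

lemma hasDerivAt_pow_mul_exp_sub_sq_div_two (n : ℕ) (t w : ℝ) :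
    HasDerivAt (fun w : ℝ => w ^ n * exp (-t * w - w ^ 2 / 2))
      (n * (w ^ (n - 1) * exp (-t * w - w ^ 2 / 2))
        - t * (w ^ n * exp (-t * w - w ^ 2 / 2))
        - w ^ (n + 1) * exp (-t * w - w ^ 2 / 2)) w := by
  have hexponent : HasDerivAt (fun w : ℝ => -t * w - w ^ 2 / 2) (-t - w) w :=
    (((hasDerivAt_id w).const_mul (-t)).sub ((hasDerivAt_pow 2 w).div_const 2)).congr_deriv
      (by simp)
  exact ((hasDerivAt_pow n w).mul hexponent.exp).congr_deriv (by ring)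

-- `0 ^ n` is the boundary term at `w = 0`; for `n = 0` the truncated `n - 1` has coefficient `0`.
lemma halfMoment_succ (n : ℕ) (t : ℝ) :
    halfMoment (n + 1) t = n * halfMoment (n - 1) t - t * halfMoment n t + 0 ^ n := by
  have hint := fun k => (integrable_pow_mul_exp_sub_sq_div_two k t).integrableOn (s := Set.Ioi 0)
  have hpred := (hint (n - 1)).const_mul (n : ℝ)
  have hself := (hint n).const_mul t
  have hderiv := fun w (_ : w ∈ Set.Ioi (0 : ℝ)) => hasDerivAt_pow_mul_exp_sub_sq_div_two n t w
  have hderiv_int := (hpred.sub hself).sub (hint (n + 1))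
  have hlim := tendsto_zero_of_hasDerivAt_of_integrableOn_Ioi hderiv hderiv_int (hint n)
  have hftc := integral_Ioi_of_hasDerivAt_of_tendsto
    (hasDerivAt_pow_mul_exp_sub_sq_div_two n t 0).continuousAt.continuousWithinAt
    hderiv hderiv_int hlim
  have hsplit := integral_sub (hpred.sub hself) (hint (n + 1))
  simp only [Pi.sub_apply] at hsplit
  rw [hsplit, integral_sub hpred hself, integral_const_mul, integral_const_mul] at hftc
  simp only [neg_mul, mul_zero, ne_eq, OfNat.ofNat_ne_zero, not_false_eq_true, zero_pow,
    zero_div, sub_zero, exp_zero, mul_one, zero_sub] at hftc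
  simp only [halfMoment, gaussLaplace, neg_mul]
  linarith

lemma halfMoment_one (t : ℝ) : halfMoment 1 t = 1 - t * millsRatio t := by
  have := halfMoment_succ 0 t
  simp only [zero_add, CharP.cast_eq_zero, zero_mul, halfMoment_zero, pow_zero] at this
  linarith

lemma halfMoment_add_two (n : ℕ) (t : ℝ) :
    halfMoment (n + 2) t = (n + 1) * halfMoment n t - t * halfMoment (n + 1) t := by
  simpa using halfMoment_succ (n + 1) t

lemma halfMoment_succ_le_of_mul_le {t x : ℝ} {n : ℕ} (htx : 0 < t + x)
    (h : x * halfMoment (n + 1) t ≤ halfMoment (n + 2) t) :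
    halfMoment (n + 1) t ≤ (n + 1) / (t + x) * halfMoment n t := by
  rw [halfMoment_add_two] at h
  rw [div_mul_eq_mul_div, le_div_iff₀ htx]
  linarith

lemma le_halfMoment_succ_of_le_mul {t x : ℝ} {n : ℕ} (htx : 0 < t + x)
    (h : halfMoment (n + 2) t ≤ x * halfMoment (n + 1) t) :
    (n + 1) / (t + x) * halfMoment n t ≤ halfMoment (n + 1) t := by
  rw [halfMoment_add_two] at h
  rw [div_mul_eq_mul_div, div_le_iff₀ htx]
  linarith

lemma halfMoment_succ_mem_Icc {t : ℝ} (ht : 0 < t) (m n : ℕ) :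
    halfMoment (n + 1) t ∈ Set.Icc (laplaceFrac t n (2 * m) * halfMoment n t)
      (laplaceFrac t n (2 * m + 1) * halfMoment n t) := by
  have hpos : ∀ n m, 0 < t + laplaceFrac t n m := fun n m =>
    add_pos_of_pos_of_nonneg ht (laplaceFrac_nonneg ht.le n m)
  have upper_of_lower : ∀ {k}, (∀ n, laplaceFrac t n k * halfMoment n t ≤ halfMoment (n + 1) t) →
      ∀ n, halfMoment (n + 1) t ≤ laplaceFrac t n (k + 1) * halfMoment n t :=
    fun h n => halfMoment_succ_le_of_mul_le (hpos _ _) (h (n + 1))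
  have lower_of_upper : ∀ {k}, (∀ n, halfMoment (n + 1) t ≤ laplaceFrac t n k * halfMoment n t) →
      ∀ n, laplaceFrac t n (k + 1) * halfMoment n t ≤ halfMoment (n + 1) t :=
    fun h n => le_halfMoment_succ_of_le_mul (hpos _ _) (h (n + 1))
  have lower : ∀ n, laplaceFrac t n (2 * m) * halfMoment n t ≤ halfMoment (n + 1) t := by
    induction m with
    | zero => exact fun n => by simpa [laplaceFrac] using halfMoment_nonneg (n + 1) t
    | succ m ih => exact lower_of_upper (upper_of_lower ih)
  exact ⟨lower n, upper_of_lower lower n⟩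

theorem millsRatio_mem_Icc {t : ℝ} (ht : 0 < t) (m : ℕ) :
    millsRatio t ∈ Set.Icc (millsConvergent t (2 * m + 1)) (millsConvergent t (2 * m)) := by
  have hpos : ∀ k, 0 < t + laplaceFrac t 0 k := fun k =>
    add_pos_of_pos_of_nonneg ht (laplaceFrac_nonneg ht.le 0 k)
  obtain ⟨hlower, hupper⟩ := halfMoment_succ_mem_Icc ht m 0
  rw [zero_add, halfMoment_one, halfMoment_zero] at hlower hupper
  rw [millsConvergent, millsConvergent, Set.mem_Icc, div_le_iff₀ (hpos _), le_div_iff₀ (hpos _)]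
  constructor <;> linarith

end ContinuedFraction

section LogarithmApproximation

lemma abs_log_one_add_sub_le {p p' : ℝ → ℝ} {ε u : ℝ}
    (hp : ∀ x ∈ Set.Icc (0 : ℝ) 1, HasDerivAt p (p' x) x) (hp0 : p 0 = 0)
    (hε : ∀ x ∈ Set.Icc (0 : ℝ) 1, |1 - (1 + x) * p' x| ≤ ε) (hu : u ∈ Set.Icc (0 : ℝ) 1) :
    |log (1 + u) - p u| ≤ ε * u := by
  have hderiv : ∀ x ∈ Set.Icc (0 : ℝ) 1, HasDerivWithinAt (fun x => log (1 + x) - p x)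
      ((1 - (1 + x) * p' x) / (1 + x)) (Set.Icc 0 1) x := fun x hx => by
    have hx1 : 1 + x ≠ 0 := by linarith [hx.1]
    refine ((((hasDerivAt_id x).const_add 1).log hx1).sub (hp x hx)).hasDerivWithinAt.congr_deriv ?_
    rw [id_eq, sub_div, mul_div_cancel_left₀ _ hx1]
  have hbound : ∀ x ∈ Set.Icc (0 : ℝ) 1, ‖(1 - (1 + x) * p' x) / (1 + x)‖ ≤ ε := fun x hx => by
    have hx1 : 1 ≤ 1 + x := by linarith [hx.1]
    rw [norm_div, norm_eq_abs, norm_eq_abs, abs_of_pos (zero_lt_one.trans_le hx1)]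
    exact (div_le_self (abs_nonneg _) hx1).trans (hε x hx)
  have hmvt := (convex_Icc (0 : ℝ) 1).norm_image_sub_le_of_norm_hasDerivWithin_le hderiv hbound
    (Set.left_mem_Icc.2 zero_le_one) hu
  simpa [hp0, abs_of_nonneg hu.1] using hmvt

/-- Coefficients of `u, u², …, u⁶` in a polynomial approximation `p` of `log (1 + u)` on `[0, 1]`.
They are determined by `1 - (1 + x) p'(x) = T₆(2x - 1) / T₆(-3)`, where `T₆` is the Chebyshev
polynomial and `T₆(-3) = 19601`. -/
def logCoeff : Fin 6 → ℚ :=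
  ![19600 / 19601, -9764 / 19601, 18688 / 58803, -3776 / 19601, 8192 / 98005, -1024 / 58803]

lemma eval_chebyshev_T_six (x : ℝ) :
    (Polynomial.Chebyshev.T ℝ 6).eval x = 32 * x ^ 6 - 48 * x ^ 4 + 18 * x ^ 2 - 1 := by
  rw [show (6 : ℤ) = 2 * 3 from rfl, Polynomial.Chebyshev.T_mul, Polynomial.Chebyshev.T_two,
    show (3 : ℤ) = 1 + 2 from rfl, Polynomial.Chebyshev.T_add_two]
  simp only [Int.reduceAdd, Polynomial.Chebyshev.T_two, Polynomial.Chebyshev.T_one,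
    Polynomial.sub_comp, Polynomial.mul_comp, Polynomial.ofNat_comp, Nat.cast_ofNat,
    Polynomial.pow_comp, Polynomial.X_comp, Polynomial.one_comp, Polynomial.eval_sub,
    Polynomial.eval_mul, Polynomial.eval_ofNat, Polynomial.eval_pow, Polynomial.eval_X,
    Polynomial.eval_one, sub_left_inj]
  ring

lemma abs_log_one_add_sub_logCoeff_le {u : ℝ} (hu : u ∈ Set.Icc (0 : ℝ) 1) :
    |log (1 + u) - ∑ k, (logCoeff k : ℝ) * u ^ ((k : ℕ) + 1)| ≤ 1 / 19601 * u := by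
  refine abs_log_one_add_sub_le (p := fun u => ∑ k, (logCoeff k : ℝ) * u ^ ((k : ℕ) + 1))
    (fun x _ => HasDerivAt.fun_sum fun k _ => (hasDerivAt_pow (k + 1) x).const_mul _)
    (by simp) (fun x hx => ?_) hu
  have hT : |(Polynomial.Chebyshev.T ℝ 6).eval (2 * x - 1)| ≤ 1 :=
    Polynomial.Chebyshev.abs_eval_T_real_le_one 6
      (abs_le.2 ⟨by linarith [hx.1], by linarith [hx.2]⟩)
  have hresidual : 1 - (1 + x) * ∑ k, (logCoeff k : ℝ) * (((k : ℕ) + 1 : ℕ) * x ^ (k : ℕ)) =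
      (Polynomial.Chebyshev.T ℝ 6).eval (2 * x - 1) / 19601 := by
    rw [eval_chebyshev_T_six]
    simp only [logCoeff, Nat.cast_add, Nat.cast_one, Fin.sum_univ_six, Fin.isValue,
      Matrix.cons_val_zero, Rat.cast_div, Rat.cast_ofNat, Fin.coe_ofNat_eq_mod, Nat.zero_mod,
      CharP.cast_eq_zero, zero_add, pow_zero, mul_one, Matrix.cons_val_one, Rat.cast_neg,
      Nat.one_mod, pow_one, Matrix.cons_val, Nat.reduceMod, Nat.cast_ofNat, Nat.mod_succ]
    ring
  simp only [Nat.add_sub_cancel]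
  rw [hresidual, abs_div, abs_of_pos (by norm_num : (0 : ℝ) < 19601)]
  gcongr

end LogarithmApproximation

section LogCosh

lemma abs_log_cosh_le (x : ℝ) : |log (cosh x)| ≤ |x| := by
  rw [abs_of_nonneg (log_nonneg (one_le_cosh x)), log_le_iff_le_exp (cosh_pos x), ← cosh_abs,
    cosh_eq]
  linarith [exp_le_exp.2 (neg_le_self (abs_nonneg x))]

lemma hasDerivAt_log_cosh_mul (R w : ℝ) :
    HasDerivAt (fun w => log (cosh (R * w))) (R * tanh (R * w)) w :=
  (((hasDerivAt_id w).const_mul R).cosh.log (cosh_pos _).ne').congr_deriv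
    (by simp only [id_eq, mul_one, tanh_eq_sinh_div_cosh]; ring)

lemma log_one_add_exp_neg_two_mul (x : ℝ) :
    log (1 + exp (-(2 * x))) = log (cosh x) - x + log 2 := by
  have hfactor : 1 + exp (-(2 * x)) = cosh x * exp (-x) * 2 := by
    rw [cosh_eq, div_mul_eq_mul_div, div_mul_cancel₀ _ two_ne_zero, add_mul, ← exp_add, ← exp_add]
    rw [add_neg_cancel, exp_zero, ← neg_add, ← two_mul, add_comm]
  rw [hfactor, log_mul (by positivity) two_ne_zero, log_mul (by positivity) (by positivity),
    log_exp, ← sub_eq_add_neg]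

lemma integrable_log_cosh_mul_exp (R t : ℝ) :
    Integrable (fun w => log (cosh (R * w)) * exp (-t * w - w ^ 2 / 2)) :=
  integrable_mul_exp_sub_sq_div_of_abs_le (A := 0) (B := |R|) two_pos
    (continuous_iff_continuousAt.2 fun w =>
      (hasDerivAt_log_cosh_mul R w).continuousAt).aestronglyMeasurable
    (fun w => by simpa [abs_mul] using abs_log_cosh_le (R * w)) t

/-- The Gaussian–Laplace transform of `w ↦ log (1 + e^{-2Rw})`, which is what remains of
`w ↦ log (cosh (R w))` on the half-line once its affine asymptote `R w - log 2` is removed. -/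
noncomputable def logLaplace (R t : ℝ) : ℝ :=
  gaussLaplace (fun w => log (1 + exp (-(2 * R * w)))) t

lemma log_one_add_exp_mul_exp_eq (R t w : ℝ) :
    log (1 + exp (-(2 * R * w))) * exp (-t * w - w ^ 2 / 2) =
      log (cosh (R * w)) * exp (-t * w - w ^ 2 / 2)
        - R * (w ^ 1 * exp (-t * w - w ^ 2 / 2))
        + log 2 * (w ^ 0 * exp (-t * w - w ^ 2 / 2)) := by
  rw [mul_assoc, log_one_add_exp_neg_two_mul]
  ring

end LogCosh

section ExponentialSum

lemma exp_neg_mul_pow_mul_exp (n : ℕ) (s t w : ℝ) :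
    exp (-(s * w)) ^ n * exp (-t * w - w ^ 2 / 2) = exp (-(t + n * s) * w - w ^ 2 / 2) := by
  rw [← exp_nat_mul, ← exp_add]
  ring_nf

lemma gaussLaplace_exp_neg_mul_pow (n : ℕ) (s t : ℝ) :
    gaussLaplace (fun w => exp (-(s * w)) ^ n) t = millsRatio (t + n * s) := by
  simp only [gaussLaplace, millsRatio, exp_neg_mul_pow_mul_exp, one_mul]

lemma integrable_exp_neg_mul_pow_mul_exp (n : ℕ) (s t : ℝ) :
    Integrable (fun w : ℝ => exp (-(s * w)) ^ n * exp (-t * w - w ^ 2 / 2)) := by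
  simpa only [exp_neg_mul_pow_mul_exp] using integrable_exp_sub_sq_div two_pos (t + n * s)

theorem abs_gaussLaplace_comp_exp_sub_sum_le {N : ℕ} {g : ℝ → ℝ} {a : Fin N → ℝ} {ε s t : ℝ}
    (hg : ∀ u ∈ Set.Icc (0 : ℝ) 1, |g u - ∑ k, a k * u ^ ((k : ℕ) + 1)| ≤ ε * u) (hs : 0 ≤ s)
    (hint : IntegrableOn (fun w => g (exp (-(s * w))) * exp (-t * w - w ^ 2 / 2)) (Set.Ioi 0)) :
    |gaussLaplace (fun w => g (exp (-(s * w)))) t - ∑ k, a k * millsRatio (t + ((k : ℕ) + 1) * s)|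
      ≤ ε * millsRatio (t + s) := by
  have hterm := fun n => (integrable_exp_neg_mul_pow_mul_exp n s t).integrableOn (s := Set.Ioi 0)
  have hmono : ∀ n : ℕ, ∫ w in Set.Ioi 0, exp (-(s * w)) ^ n * exp (-t * w - w ^ 2 / 2) =
      millsRatio (t + n * s) := fun n => gaussLaplace_exp_neg_mul_pow n s t
  have hsum : ∑ k, a k * millsRatio (t + ((k : ℕ) + 1) * s) = ∫ w in Set.Ioi 0,
      ∑ k, a k * (exp (-(s * w)) ^ ((k : ℕ) + 1) * exp (-t * w - w ^ 2 / 2)) := by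
    rw [integral_finsetSum _ fun k _ => (hterm _).const_mul _]
    simp only [integral_const_mul, hmono, Nat.cast_add, Nat.cast_one]
  have hbound : ∫ w in Set.Ioi 0, ε * (exp (-(s * w)) ^ 1 * exp (-t * w - w ^ 2 / 2)) =
      ε * millsRatio (t + s) := by
    rw [integral_const_mul, hmono, Nat.cast_one, one_mul]
  have hsum_int : IntegrableOn (fun w =>
      ∑ k, a k * (exp (-(s * w)) ^ ((k : ℕ) + 1) * exp (-t * w - w ^ 2 / 2))) (Set.Ioi 0) :=
    integrable_finsetSum _ fun k _ => (hterm _).const_mul _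
  rw [hsum, gaussLaplace, ← integral_sub hint hsum_int, ← hbound, ← norm_eq_abs]
  refine norm_integral_le_of_norm_le ((hterm 1).const_mul ε)
    ((ae_restrict_mem measurableSet_Ioi).mono fun w hw => ?_)
  have hu : exp (-(s * w)) ∈ Set.Icc (0 : ℝ) 1 :=
    ⟨(exp_pos _).le, exp_le_one_iff.2 (neg_nonpos.2 (mul_nonneg hs (le_of_lt hw)))⟩
  simp_rw [← mul_assoc, ← Finset.sum_mul, ← sub_mul]
  rw [norm_mul, norm_of_nonneg (exp_pos _).le, pow_one]
  gcongr
  exact hg _ hu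

end ExponentialSum

section LogLaplace

lemma integrable_log_one_add_exp_mul_exp (R t : ℝ) :
    Integrable (fun w => log (1 + exp (-(2 * R * w))) * exp (-t * w - w ^ 2 / 2)) := by
  simp_rw [log_one_add_exp_mul_exp_eq]
  exact ((integrable_log_cosh_mul_exp R t).sub
    ((integrable_pow_mul_exp_sub_sq_div_two 1 t).const_mul R)).add
    ((integrable_pow_mul_exp_sub_sq_div_two 0 t).const_mul (log 2))

lemma gaussLaplace_log_cosh (R t : ℝ) :
    gaussLaplace (fun w => log (cosh (R * w))) t =
      R * (1 - t * millsRatio t) - log 2 * millsRatio t + logLaplace R t := by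
  have hcosh := (integrable_log_cosh_mul_exp R t).integrableOn (s := Set.Ioi 0)
  have hmoment := fun n =>
    (integrable_pow_mul_exp_sub_sq_div_two n t).integrableOn (s := Set.Ioi 0)
  have hdiff : IntegrableOn (fun w => log (cosh (R * w)) * exp (-t * w - w ^ 2 / 2)
      - R * (w ^ 1 * exp (-t * w - w ^ 2 / 2))) (Set.Ioi 0) :=
    hcosh.sub ((hmoment 1).const_mul R)
  have hlog : logLaplace R t = gaussLaplace (fun w => log (cosh (R * w))) t
      - R * halfMoment 1 t + log 2 * halfMoment 0 t := by
    simp_rw [logLaplace, gaussLaplace, log_one_add_exp_mul_exp_eq]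
    rw [integral_add hdiff ((hmoment 0).const_mul (log 2)),
      integral_sub hcosh ((hmoment 1).const_mul R), integral_const_mul, integral_const_mul]
    rfl
  rw [hlog, halfMoment_one, halfMoment_zero]
  ring

lemma abs_logLaplace_sub_sum_le {R : ℝ} (hR : 0 ≤ R) (t : ℝ) :
    |logLaplace R t - ∑ k, (logCoeff k : ℝ) * millsRatio (t + ((k : ℕ) + 1) * (2 * R))| ≤
      1 / 19601 * millsRatio (t + 2 * R) :=
  abs_gaussLaplace_comp_exp_sub_sum_le (fun _ hu => abs_log_one_add_sub_logCoeff_le hu)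
    (by positivity) (integrable_log_one_add_exp_mul_exp R t).integrableOn

end LogLaplace

section RationalEnclosure

/-- Rational approximation of `logLaplace R t`: the logarithm is replaced by the polynomial with
coefficients `logCoeff`, and each resulting Mills ratio by its convergent of depth `2m`. -/
def logLaplaceApprox (m : ℕ) (R t : ℚ) : ℚ :=
  ∑ k, logCoeff k * millsConvergent (t + ((k : ℕ) + 1) * (2 * R)) (2 * m)

/-- Bound for the error of `logLaplaceApprox`; the sum accounts for the continued fractions, the
last term for the polynomial. -/
def logLaplaceError (m : ℕ) (R t : ℚ) : ℚ :=
  ∑ k, |logCoeff k| * (millsConvergent (t + ((k : ℕ) + 1) * (2 * R)) (2 * m) -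
      millsConvergent (t + ((k : ℕ) + 1) * (2 * R)) (2 * m + 1)) +
    1 / 19601 * millsConvergent (t + 2 * R) (2 * m)

theorem abs_logLaplace_sub_approx_le {R t : ℚ} (hR : 0 ≤ R) (ht : 0 < t + 2 * R) (m : ℕ) :
    |logLaplace R t - logLaplaceApprox m R t| ≤ logLaplaceError m R t := by
  have hpos : ∀ k : Fin 6, 0 < (t : ℝ) + ((k : ℕ) + 1) * (2 * R) := fun k => by
    have : (0 : ℚ) ≤ (k : ℕ) * (2 * R) := by positivity
    exact_mod_cast (by linarith : 0 < t + ((k : ℕ) + 1) * (2 * R))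
  have hpoly := abs_logLaplace_sub_sum_le (Rat.cast_nonneg.2 hR) (t : ℝ)
  have hpoly_le := (millsRatio_mem_Icc (by exact_mod_cast ht : 0 < (t : ℝ) + 2 * R) m).2
  have hfrac : |∑ k, (logCoeff k : ℝ) * millsRatio (t + ((k : ℕ) + 1) * (2 * R)) -
        logLaplaceApprox m R t| ≤
      ∑ k, |(logCoeff k : ℝ)| * (millsConvergent (t + ((k : ℕ) + 1) * (2 * R) : ℝ) (2 * m) -
        millsConvergent (t + ((k : ℕ) + 1) * (2 * R) : ℝ) (2 * m + 1)) := by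
    rw [logLaplaceApprox]
    push_cast
    rw [← Finset.sum_sub_distrib]
    refine (Finset.abs_sum_le_sum_abs _ _).trans (Finset.sum_le_sum fun k _ => ?_)
    obtain ⟨hlower, hupper⟩ := millsRatio_mem_Icc (hpos k) m
    rw [← mul_sub, abs_mul, abs_sub_comm, abs_of_nonneg (sub_nonneg.2 hupper)]
    gcongr
  rw [logLaplaceError]
  push_cast
  linarith [abs_sub_le (logLaplace R t)
    (∑ k, (logCoeff k : ℝ) * millsRatio (t + ((k : ℕ) + 1) * (2 * R)))
    (logLaplaceApprox m R t)]

lemma abs_logLaplace_sub_le {R t x δ : ℚ} (m : ℕ)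
    (h : 0 ≤ R ∧ 0 < t + 2 * R ∧ |logLaplaceApprox m R t - x| + logLaplaceError m R t ≤ δ) :
    |logLaplace R t - x| ≤ δ := by
  obtain ⟨hR, ht, hδ⟩ := h
  have hδ' : |(logLaplaceApprox m R t : ℝ) - x| + logLaplaceError m R t ≤ δ := by
    exact_mod_cast hδ
  linarith [abs_logLaplace_sub_approx_le hR ht m,
    abs_sub_le (logLaplace R t) (logLaplaceApprox m R t) x]

lemma millsRatio_mem_Icc_of_rat {t x y : ℚ} (m : ℕ)
    (h : 0 < t ∧ x ≤ millsConvergent t (2 * m + 1) ∧ millsConvergent t (2 * m) ≤ y) :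
    millsRatio t ∈ Set.Icc (x : ℝ) y := by
  obtain ⟨ht, hx, hy⟩ := h
  obtain ⟨hlower, hupper⟩ := millsRatio_mem_Icc (Rat.cast_pos.2 ht) m
  exact ⟨le_trans (by exact_mod_cast hx) hlower, hupper.trans (by exact_mod_cast hy)⟩

end RationalEnclosure

section Threshold

lemma continuous_tanh : Continuous tanh := by
  rw [funext tanh_eq_sinh_div_cosh]
  exact continuous_sinh.div continuous_cosh fun x => (cosh_pos x).ne'

/-- The left-hand side `∫ (Q(w - R) - Q(w)) tanh(Rw) dw` of the threshold equation. -/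
noncomputable def thresholdIntegral (R : ℝ) : ℝ :=
  ∫ w : ℝ, (gaussQ (w - R) - gaussQ w) * tanh (R * w)

/-- The difference of the two sides of the threshold equation, multiplied by `√(2π) R` and written
in terms of the Mills ratio and of `logLaplace`. -/
noncomputable def thresholdGap (R : ℝ) : ℝ :=
  √(2 * π) * R ^ 2 / 2 - 2 * R
    + exp (-(R ^ 2 / 2)) *
      (2 * R - 2 * R ^ 2 * millsRatio R + logLaplace R (-R) + logLaplace R R)
    - 2 * logLaplace R 0

lemma continuous_thresholdIntegral : Continuous thresholdIntegral := by
  refine continuous_iff_continuousAt.2 fun R₀ => ?_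
  set B := |R₀| + 1
  have hnear : ∀ᶠ R in nhds R₀, |R| ≤ B :=
    (continuous_abs.tendsto R₀).eventually_le_const (lt_add_one |R₀|)
  have hmaj : Integrable (fun w : ℝ =>
      (√(2 * π))⁻¹ * (B * exp (B ^ 2 / 2)) * exp (-w ^ 2 / 4)) := by
    simpa [neg_div] using (integrable_exp_sub_sq_div four_pos 0).const_mul _
  have htanh := continuous_tanh
  refine continuousAt_of_dominated (.of_forall fun R => ?_) (hnear.mono fun R hR => ?_) hmaj
    (.of_forall fun w => ?_)
  · exact Continuous.aestronglyMeasurable (by fun_prop)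
  · refine .of_forall fun w => ?_
    rw [norm_mul]
    exact (mul_le_of_le_one_right (norm_nonneg _) (abs_tanh_lt_one _).le).trans
      (abs_gaussQ_sub_le hR w)
  · exact Continuous.continuousAt (by fun_prop)

lemma sqrt_two_pi_mul_mul_thresholdIntegral (R : ℝ) :
    √(2 * π) * (R * thresholdIntegral R) =
      exp (-(R ^ 2 / 2)) * (gaussLaplace (fun w => log (cosh (R * w))) (-R) +
        gaussLaplace (fun w => log (cosh (R * w))) R) -
      2 * gaussLaplace (fun w => log (cosh (R * w))) 0 := by
  have hparts := integral_gaussQ_sub_mul_deriv (C := |R|) (hasDerivAt_log_cosh_mul R)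
    (fun w => by
      rw [abs_mul]
      exact mul_le_of_le_one_right (abs_nonneg R) (abs_tanh_lt_one _).le) R
  have heven : Function.Even (fun w => log (cosh (R * w))) := fun w => by
    simp only [mul_neg, cosh_neg]
  have hfold := fun a =>
    integral_exp_neg_sub_sq_mul_even heven (integrable_log_cosh_mul_exp R (-a))
  have hzero := hfold 0
  simp only [sub_zero, neg_zero, zero_pow two_ne_zero, zero_div, exp_zero, one_mul,
    ← two_mul] at hzero
  simp_rw [mul_left_comm _ R] at hparts
  rw [integral_const_mul, hfold R, hzero] at hparts
  rw [thresholdIntegral, hparts, mul_inv_cancel_left₀ (by positivity)]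

theorem sqrt_two_pi_mul_mul_thresholdIntegral_sub_half (R : ℝ) :
    √(2 * π) * R * (thresholdIntegral R - R / 2) = thresholdGap R := by
  have hintegral := sqrt_two_pi_mul_mul_thresholdIntegral R
  have hR := sqrt_two_pi_eq_millsRatio R
  have h0 : √(2 * π) = 2 * millsRatio 0 := by simpa [two_mul] using sqrt_two_pi_eq_millsRatio 0
  simp only [gaussLaplace_log_cosh] at hintegral
  rw [thresholdGap]
  linear_combination hintegral + (log 2 - R ^ 2) * hR - log 2 * h0

-- `2 log 2` is close to `R ^ 2 / 2` for the relevant `R`, so first-order bounds on `exp` suffice.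
lemma four_mul_exp_neg (x : ℝ) : 4 * exp (-x) = exp (2 * log 2 - x) := by
  rw [sub_eq_add_neg, exp_add, two_mul, exp_add, exp_log two_pos]
  norm_num

lemma sqrt_two_pi_mem_Ioo : √(2 * π) ∈ Set.Ioo (2.506627 : ℝ) 2.506629 :=
  ⟨lt_sqrt_of_sq_lt (by linarith [pi_gt_d6]),
    (sqrt_lt' (by norm_num)).2 (by linarith [pi_lt_d6])⟩

lemma exp_neg_sq_div_two_le : exp (-(1.665 ^ 2 / 2)) ≤ 0.2501 := by
  have hexponent : 2 * log 2 - 1.665 ^ 2 / 2 ≤ 0.0003 := by linarith [log_two_lt_d9]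
  have hexp : exp 0.0003 ≤ 1 / (1 - 0.0003) :=
    exp_bound_div_one_sub_of_interval (by norm_num) (by norm_num)
  linarith [four_mul_exp_neg (1.665 ^ 2 / 2), exp_le_exp.2 hexponent]

lemma le_exp_neg_sq_div_two : 0.249629 ≤ exp (-(1.666 ^ 2 / 2)) := by
  linarith [four_mul_exp_neg (1.666 ^ 2 / 2), add_one_le_exp (2 * log 2 - 1.666 ^ 2 / 2),
    log_two_gt_d9]

lemma thresholdGap_neg : thresholdGap 1.665 < 0 := by
  have hM : 0.48074 ≤ millsRatio 1.665 :=
    mod_cast (millsRatio_mem_Icc_of_rat 16 (t := 1.665) (x := 0.48074) (y := 0.48075)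
      (by decide +kernel)).1
  have hL_neg : |logLaplace 1.665 (-1.665) - 0.41043| ≤ 0.00003 := by
    simpa only [Rat.cast_neg, Rat.cast_ofScientific] using
      abs_logLaplace_sub_le 16 (R := 1.665) (t := -1.665) (x := 0.41043) (δ := 0.00003)
        (by decide +kernel)
  have hL_pos : |logLaplace 1.665 1.665 - 0.15199| ≤ 0.00003 :=
    mod_cast abs_logLaplace_sub_le 16 (R := 1.665) (t := 1.665) (x := 0.15199) (δ := 0.00003)
      (by decide +kernel)
  have hL_zero : |logLaplace 1.665 0 - 0.22647| ≤ 0.00003 :=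
    mod_cast abs_logLaplace_sub_le 16 (R := 1.665) (t := 0) (x := 0.22647) (δ := 0.00003)
      (by decide +kernel)
  have hfactor : 2 * 1.665 - 2 * 1.665 ^ 2 * millsRatio 1.665
      + logLaplace 1.665 (-1.665) + logLaplace 1.665 1.665 ≤ 1.228 := by
    linarith [abs_le.1 hL_neg, abs_le.1 hL_pos]
  have hproduct := mul_le_mul_of_nonneg_left hfactor (exp_pos (-(1.665 ^ 2 / 2))).le
  rw [thresholdGap]
  linarith [exp_neg_sq_div_two_le, sqrt_two_pi_mem_Ioo.2, abs_le.1 hL_zero]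

lemma thresholdGap_pos : 0 < thresholdGap 1.666 := by
  have hM : millsRatio 1.666 ≤ 0.48055 :=
    mod_cast (millsRatio_mem_Icc_of_rat 16 (t := 1.666) (x := 0.48054) (y := 0.48055)
      (by decide +kernel)).2
  have hL_neg : |logLaplace 1.666 (-1.666) - 0.41027| ≤ 0.00003 := by
    simpa only [Rat.cast_neg, Rat.cast_ofScientific] using
      abs_logLaplace_sub_le 16 (R := 1.666) (t := -1.666) (x := 0.41027) (δ := 0.00003)
        (by decide +kernel)
  have hL_pos : |logLaplace 1.666 1.666 - 0.15191| ≤ 0.00003 :=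
    mod_cast abs_logLaplace_sub_le 16 (R := 1.666) (t := 1.666) (x := 0.15191) (δ := 0.00003)
      (by decide +kernel)
  have hL_zero : |logLaplace 1.666 0 - 0.22635| ≤ 0.00003 :=
    mod_cast abs_logLaplace_sub_le 16 (R := 1.666) (t := 0) (x := 0.22635) (δ := 0.00003)
      (by decide +kernel)
  have hfactor : 1.2265 ≤ 2 * 1.666 - 2 * 1.666 ^ 2 * millsRatio 1.666
      + logLaplace 1.666 (-1.666) + logLaplace 1.666 1.666 := by
    linarith [abs_le.1 hL_neg, abs_le.1 hL_pos]
  have hproduct := mul_le_mul_of_nonneg_left hfactor (exp_pos (-(1.666 ^ 2 / 2))).le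
  rw [thresholdGap]
  linarith [le_exp_neg_sq_div_two, sqrt_two_pi_mem_Ioo.1, abs_le.1 hL_zero]

end Threshold

/-- There exists `R ∈ (1.665, 1.666)` with
`∫_ℝ (Q(w-R) - Q(w)) tanh(Rw) dw = R/2`.  (This equation characterizes the threshold
`R̄₁ ≈ 1.665925641` for optimality of the two-point input `{-R, R}`.) -/
theorem stmt11 :
    ∃ R : ℝ, R ∈ Set.Ioo (1.665 : ℝ) 1.666 ∧
      (∫ w : ℝ, (gaussQ (w - R) - gaussQ w) * Real.tanh (R * w)) = R / 2 := by
  have hcont : Continuous thresholdGap := by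
    have := continuous_thresholdIntegral
    rw [← funext sqrt_two_pi_mul_mul_thresholdIntegral_sub_half]
    fun_prop
  obtain ⟨R, hR, hzero⟩ := intermediate_value_Ioo (by norm_num) hcont.continuousOn
    ⟨thresholdGap_neg, thresholdGap_pos⟩
  have hR_pos : 0 < R := by linarith [hR.1]
  rw [← sqrt_two_pi_mul_mul_thresholdIntegral_sub_half] at hzero
  exact ⟨R, hR, sub_eq_zero.1 ((mul_eq_zero.1 hzero).resolve_left (by positivity))⟩
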